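/- Let 0 ≤ m < n be integers, let μ be a bounded signed Borel measure on [0,1], and let I ⊆ ℝ be a nonempty open interval bounded from above. Then the inequality ∫_{[0,1]} f((1−t)x + t y) dμ(t) ≥ 0 holds for all x, y ∈ I with x < y and for every f : I → ℝ such that (−1)^{n−k} f is k-increasing on I for every k ∈ {m, m+1, …, n}, if and only if the following three conditions hold: (i) μ_0(1) = … = μ_{m−1}(1) = 0; (ii) (−1)^{n−k} μ_k(1) ≥ 0 for all k ∈ {m,…,n−1}; (iii) μ_{n−1}^-(τ) ≤ 0 for all τ ∈ [0,1). -/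

import Mathlib

open MeasureTheory Set

/-- Integral of `f` over the set `A` with respect to the (automatically bounded) signed
Borel measure `μ`, defined via the Jordan decomposition. -/
noncomputable def sInt (μ : MeasureTheory.SignedMeasure ℝ) (A : Set ℝ) (f : ℝ → ℝ) : ℝ :=
  (∫ t in A, f t ∂μ.toJordanDecomposition.posPart) -
  (∫ t in A, f t ∂μ.toJordanDecomposition.negPart)

/-- `μ_k(τ) = ∫_{[0,1]} (t-τ)^k dμ(t)` (with the convention `0^0 = 1`). -/
noncomputable def muK (μ : MeasureTheory.SignedMeasure ℝ) (k : ℕ) (τ : ℝ) : ℝ :=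
  sInt μ (Icc 0 1) (fun t => (t - τ) ^ k)

/-- `μ_k^-(τ) = ∫_{[0,τ)} (t-τ)^k dμ(t)`. -/
noncomputable def muMinus (μ : MeasureTheory.SignedMeasure ℝ) (k : ℕ) (τ : ℝ) : ℝ :=
  sInt μ (Ico 0 τ) (fun t => (t - τ) ^ k)

/-- `μ_k^+(τ) = ∫_{(τ,1]} (t-τ)^k dμ(t)`. -/
noncomputable def muPlus (μ : MeasureTheory.SignedMeasure ℝ) (k : ℕ) (τ : ℝ) : ℝ :=
  sInt μ (Ioc τ 1) (fun t => (t - τ) ^ k)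

/-- The `n`th-order divided difference of `f` at the points `x 0, …, x n`. -/
noncomputable def divDiff (f : ℝ → ℝ) (n : ℕ) (x : Fin (n + 1) → ℝ) : ℝ :=
  ∑ j : Fin (n + 1), f (x j) / ∏ i ∈ Finset.univ.erase j, (x j - x i)

/-- `f` is `n`-increasing on `I`: all `n`th-order divided differences at pairwise
distinct points of `I` are nonnegative. -/
def nIncreasingOn (f : ℝ → ℝ) (I : Set ℝ) (n : ℕ) : Prop :=
  ∀ x : Fin (n + 1) → ℝ, Function.Injective x → (∀ j, x j ∈ I) → 0 ≤ divDiff f n x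

/-- `f` is `n`-decreasing on `I` if `-f` is `n`-increasing on `I`. -/
def nDecreasingOn (f : ℝ → ℝ) (I : Set ℝ) (n : ℕ) : Prop :=
  nIncreasingOn (fun u => -f u) I n

/-- `φ⁺_{p,n}(u) = ((u-p)_+)^n` for `n ≥ 1`, and `φ⁺_{p,0}` is the characteristic
function of `(p,∞)`. -/
noncomputable def phiPlus (p : ℝ) (n : ℕ) (u : ℝ) : ℝ :=
  if n = 0 then (if p < u then 1 else 0) else (max 0 (u - p)) ^ n

/-- `φ⁻_{p,n}(u) = ((u-p)_−)^n` for `n ≥ 1`, and `φ⁻_{p,0}` is the characteristic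
function of `(−∞,p)`. -/
noncomputable def phiMinus (p : ℝ) (n : ℕ) (u : ℝ) : ℝ :=
  if n = 0 then (if u < p then 1 else 0) else (max 0 (p - u)) ^ n

/- The set `J(p)` associated with an interval `I` and a point `p ∈ ℝ`:
`(−∞, (p − inf I)/(sup I − inf I))` if `p ≤ inf I` (interpreted as `(−∞,0)` when `I` is
unbounded above), `ℝ` if `p ∈ I`, and `(1 + (p − sup I)/(sup I − inf I), ∞)` if
`p ≥ sup I` (interpreted as `(1,∞)` when `I` is unbounded below). -/
open scoped Classical in
noncomputable def Jset (I : Set ℝ) (p : ℝ) : Set ℝ :=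
  if p ∈ I then Set.univ
  else if p ∈ lowerBounds I then
    (if BddAbove I then Set.Iio ((p - sInf I) / (sSup I - sInf I)) else Set.Iio 0)
  else
    (if BddBelow I then Set.Ioi (1 + (p - sSup I) / (sSup I - sInf I)) else Set.Ioi 1)

/-
Pulling `f` back along `t ↦ (1 - t) x + t y` reduces everything to test functions on `[0, 1]`.
Necessity: condition (i) comes from `± (u - y) ^ k` with `k < m`, condition (ii) from
`± (u - sup I) ^ k`, letting `y` tend to `sup I`, and condition (iii) from the truncated powers
`± ((u - p)_-) ^ (n - 1)`. Sufficiency: a smooth `f` is integrated by means of its Taylor formula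
at `1`, whose remainder has the kernel `((t - s)_-) ^ (n - 1)`, so that `∫ f dμ` is a combination of
the `μ_k(1)` and the `μ_{n-1}^-(s)` with coefficients of the right signs. Bernstein polynomials
inherit the sign conditions from `f` and converge uniformly to it when it is continuous, as is the
case for `n ≥ 2`; for `n = 1` the function is merely monotone, and (iii) becomes a stochastic
dominance between the two Jordan parts of `μ`.
-/

/-- The class of test functions of the theorem: `(-1)^{n-k} f` is `k`-increasing on `I` whenever
`m ≤ k ≤ n`. -/
def AltIncreasingOn (f : ℝ → ℝ) (I : Set ℝ) (m n : ℕ) : Prop :=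
  ∀ k, m ≤ k → k ≤ n → nIncreasingOn (fun u => (-1 : ℝ) ^ (n - k) * f u) I k

section DividedDifference

open Polynomial

variable {f g : ℝ → ℝ} {I J : Set ℝ} {j k m n : ℕ}

lemma divDiff_congr {x : Fin (k + 1) → ℝ} (h : ∀ i, f (x i) = g (x i)) :
    divDiff f k x = divDiff g k x :=
  Finset.sum_congr rfl fun i _ => by rw [h i]

lemma divDiff_const_mul (c : ℝ) (f : ℝ → ℝ) (x : Fin (k + 1) → ℝ) :
    divDiff (fun u => c * f u) k x = c * divDiff f k x := by
  simp only [divDiff, Finset.mul_sum, mul_div_assoc]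

lemma divDiff_sub (f g : ℝ → ℝ) (x : Fin (k + 1) → ℝ) :
    divDiff (fun u => f u - g u) k x = divDiff f k x - divDiff g k x := by
  simp only [divDiff, sub_div, Finset.sum_sub_distrib]

lemma divDiff_comp_perm (f : ℝ → ℝ) (x : Fin (k + 1) → ℝ) (σ : Equiv.Perm (Fin (k + 1))) :
    divDiff f k (x ∘ σ) = divDiff f k x :=
  Fintype.sum_equiv σ _ _ fun j => congrArg (f (x (σ j)) / ·) <|
    Finset.prod_equiv σ (by simp) fun _ _ => rfl

lemma divDiff_comp_mul_add (f : ℝ → ℝ) {a : ℝ} (ha : a ≠ 0) (b : ℝ) (x : Fin (k + 1) → ℝ) :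
    divDiff (fun t => f (a * t + b)) k x = a ^ k * divDiff f k (fun i => a * x i + b) := by
  rw [divDiff, divDiff, Finset.mul_sum]
  refine Finset.sum_congr rfl fun j _ => ?_
  have hprod : ∏ i ∈ Finset.univ.erase j, (a * x j + b - (a * x i + b)) =
      a ^ k * ∏ i ∈ Finset.univ.erase j, (x j - x i) := by
    simp only [add_sub_add_right_eq_sub, ← mul_sub, Finset.prod_mul_distrib, Finset.prod_const,
      Finset.card_erase_of_mem (Finset.mem_univ j), Finset.card_univ, Fintype.card_fin,
      Nat.add_sub_cancel]
  rw [hprod, ← mul_div_assoc, mul_div_mul_left _ _ (pow_ne_zero k ha)]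

lemma divDiff_eval (P : ℝ[X]) {x : Fin (k + 1) → ℝ} (hx : Function.Injective x)
    (hP : P.degree < ((k + 1 : ℕ) : WithBot ℕ)) :
    divDiff (fun u => P.eval u) k x = P.coeff k := by
  have hcoeff := Lagrange.coeff_eq_sum (s := Finset.univ) hx.injOn (by simpa using hP)
  rw [Finset.card_univ, Fintype.card_fin, Nat.add_sub_cancel] at hcoeff
  exact hcoeff.symm

lemma divDiff_const (c : ℝ) {x : Fin (k + 2) → ℝ} (hx : Function.Injective x) :
    divDiff (fun _ => c) (k + 1) x = 0 := by
  simpa [coeff_C] using divDiff_eval (C c) hx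
    (degree_C_le.trans_lt (by exact_mod_cast Nat.succ_pos _))

lemma exists_interpolant (f : ℝ → ℝ) {x : Fin (k + 1) → ℝ} (hx : Function.Injective x) :
    ∃ P : ℝ[X], P.degree < ((k + 1 : ℕ) : WithBot ℕ) ∧ (∀ i, P.eval (x i) = f (x i)) ∧
      divDiff f k x = P.coeff k := by
  let P := Lagrange.interpolate Finset.univ x (f ∘ x)
  have hdeg : P.degree < ((k + 1 : ℕ) : WithBot ℕ) := by
    have hlt := Lagrange.degree_interpolate_lt (s := Finset.univ) (f ∘ x) hx.injOn
    rwa [Finset.card_univ, Fintype.card_fin] at hlt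
  have heval (i) : P.eval (x i) = f (x i) :=
    Lagrange.eval_interpolate_at_node (f ∘ x) hx.injOn (Finset.mem_univ i)
  refine ⟨P, hdeg, heval, ?_⟩
  exact (divDiff_congr fun i => (heval i).symm).trans (divDiff_eval P hx hdeg)

lemma divDiff_slope {a : ℝ} {x : Fin (k + 1) → ℝ} (hx : Function.Injective x)
    (ha : ∀ i, x i ≠ a) :
    divDiff (fun u => (f u - f a) / (u - a)) k x =
      divDiff f (k + 1) (Fin.cons a x : Fin (k + 2) → ℝ) := by
  have hinj : Function.Injective (Fin.cons a x : Fin (k + 2) → ℝ) :=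
    Fin.cons_injective_iff.2 ⟨fun ⟨i, hi⟩ => ha i hi, hx⟩
  have hsub : divDiff f (k + 1) (Fin.cons a x : Fin (k + 2) → ℝ) =
      divDiff (fun u => f u - f a) (k + 1) (Fin.cons a x : Fin (k + 2) → ℝ) := by
    rw [divDiff_sub, divDiff_const _ hinj, sub_zero]
  rw [hsub, divDiff, divDiff, Fin.sum_univ_succ (n := k + 1)]
  simp only [Fin.cons_zero, sub_self, zero_div, zero_add, Fin.cons_succ, div_div]
  refine Finset.sum_congr rfl fun i _ => congrArg _ ?_
  simp only [← Finset.filter_ne', Finset.prod_filter, Fin.prod_univ_succ (n := k + 1)]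
  simp [(Fin.succ_ne_zero i).symm]

lemma nIncreasingOn_of_strictMono
    (h : ∀ x : Fin (k + 1) → ℝ, StrictMono x → (∀ i, x i ∈ I) → 0 ≤ divDiff f k x) :
    nIncreasingOn f I k := fun x hx hI => by
  rw [← divDiff_comp_perm f x (Tuple.sort x)]
  exact h _ ((Tuple.monotone_sort x).strictMono_of_injective (hx.comp (Equiv.injective _)))
    fun _ => hI _

lemma nIncreasingOn.const_mul (h : nIncreasingOn f I k) {c : ℝ} (hc : 0 ≤ c) :
    nIncreasingOn (fun u => c * f u) I k := fun x hx hI => by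
  rw [divDiff_const_mul]
  exact mul_nonneg hc (h x hx hI)

lemma nIncreasingOn.comp_mul_add (h : nIncreasingOn f I k) {a b : ℝ} (ha : 0 < a)
    (hmaps : MapsTo (fun t => a * t + b) J I) : nIncreasingOn (fun t => f (a * t + b)) J k :=
  fun x hx hJ => by
  rw [divDiff_comp_mul_add f ha.ne']
  refine mul_nonneg (pow_nonneg ha.le k) (h _ (fun i j hij => hx ?_) fun i => hmaps (hJ i))
  exact mul_left_cancel₀ ha.ne' (add_right_cancel hij)

lemma nIncreasingOn_zero_iff : nIncreasingOn f I 0 ↔ ∀ u ∈ I, 0 ≤ f u := by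
  have hdiv (x : Fin 1 → ℝ) : divDiff f 0 x = f (x 0) := by simp [divDiff]
  refine ⟨fun h u hu => ?_, fun h x _ hI => hdiv x ▸ h _ (hI 0)⟩
  exact hdiv (fun _ => u) ▸
    h (fun _ => u) (Function.injective_of_subsingleton (α := Fin 1) _) fun _ => hu

lemma divDiff_one (f : ℝ → ℝ) (x : Fin 2 → ℝ) :
    divDiff f 1 x = (f (x 1) - f (x 0)) / (x 1 - x 0) := by
  have h0 : Finset.univ.erase (0 : Fin 2) = {1} := by decide
  have h1 : Finset.univ.erase (1 : Fin 2) = {0} := by decide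
  have hsum : divDiff f 1 x = f (x 0) / (x 0 - x 1) + f (x 1) / (x 1 - x 0) := by
    simp [divDiff, Fin.sum_univ_two, h0, h1]
  rw [hsum, ← neg_sub (x 1) (x 0), div_neg, sub_div, neg_add_eq_sub]

lemma divDiff_two (f : ℝ → ℝ) {x : Fin 3 → ℝ} (hx : StrictMono x) :
    divDiff f 2 x = ((f (x 2) - f (x 1)) / (x 2 - x 1) - (f (x 1) - f (x 0)) / (x 1 - x 0)) /
      (x 2 - x 0) := by
  have h0 : Finset.univ.erase (0 : Fin 3) = {1, 2} := by decide
  have h1 : Finset.univ.erase (1 : Fin 3) = {0, 2} := by decide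
  have h2 : Finset.univ.erase (2 : Fin 3) = {0, 1} := by decide
  have h10 : x 1 - x 0 ≠ 0 := sub_ne_zero.2 (hx (by decide)).ne'
  have h21 : x 2 - x 1 ≠ 0 := sub_ne_zero.2 (hx (by decide)).ne'
  have h20 : x 2 - x 0 ≠ 0 := sub_ne_zero.2 (hx (by decide)).ne'
  have hsum : divDiff f 2 x = f (x 0) / ((x 0 - x 1) * (x 0 - x 2)) +
      f (x 1) / ((x 1 - x 0) * (x 1 - x 2)) + f (x 2) / ((x 2 - x 0) * (x 2 - x 1)) := by
    simp [divDiff, Fin.sum_univ_three, h0, h1, h2]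
  rw [hsum, ← neg_sub (x 1) (x 0), ← neg_sub (x 2) (x 0), ← neg_sub (x 2) (x 1)]
  field_simp
  ring

lemma nIncreasingOn_one_iff : nIncreasingOn f I 1 ↔ MonotoneOn f I := by
  refine ⟨fun h a ha b hb hab => ?_, fun h => nIncreasingOn_of_strictMono fun x hx hI => ?_⟩
  · obtain rfl | hlt := hab.eq_or_lt
    · rfl
    have hinc : StrictMono ![a, b] := by simpa [Fin.strictMono_iff_lt_succ] using hlt
    have hdiv := h ![a, b] hinc.injective (by simp [Fin.forall_fin_two, ha, hb])
    simpa [divDiff_one, le_div_iff₀ (sub_pos.2 hlt)] using hdiv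
  · rw [divDiff_one]
    have hlt : x 0 < x 1 := hx (by decide)
    exact div_nonneg (sub_nonneg.2 (h (hI 0) (hI 1) hlt.le)) (sub_nonneg.2 hlt.le)

lemma nIncreasingOn_two_iff (hI : I.OrdConnected) : nIncreasingOn f I 2 ↔ ConvexOn ℝ I f := by
  refine ⟨fun h => convexOn_of_slope_mono_adjacent hI.convex fun {a b c} ha hc hab hbc => ?_,
    fun h => nIncreasingOn_of_strictMono fun x hx hxI => ?_⟩
  · have hinc : StrictMono ![a, b, c] := by
      simpa [Fin.strictMono_iff_lt_succ, Fin.forall_fin_two] using ⟨hab, hbc⟩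
    have hdiv := h ![a, b, c] hinc.injective
      (by simpa [Fin.forall_fin_succ] using ⟨ha, hI.out ha hc ⟨hab.le, hbc.le⟩, hc⟩)
    simpa [divDiff_two f hinc, le_div_iff₀ (sub_pos.2 (hab.trans hbc))] using hdiv
  · rw [divDiff_two f hx]
    exact div_nonneg (sub_nonneg.2 (h.slope_mono_adjacent (hxI 0) (hxI 2) (hx (by decide))
      (hx (by decide)))) (sub_nonneg.2 (hx.monotone (by decide)))

lemma nIncreasingOn.slope (h : nIncreasingOn f I (k + 1)) {a : ℝ} (ha : a ∈ I) :
    nIncreasingOn (fun u => (f u - f a) / (u - a)) (I \ {a}) k := fun x hx hxI => by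
  have hne (i) : x i ≠ a := (hxI i).2
  rw [divDiff_slope hx hne]
  exact h _ (Fin.cons_injective_iff.2 ⟨fun ⟨i, hi⟩ => hne i hi, hx⟩)
    (Fin.cases ha fun i => (hxI i).1)

lemma nIncreasingOn.mono (h : nIncreasingOn f I k) (hJ : J ⊆ I) : nIncreasingOn f J k :=
  fun x hx hxJ => h x hx fun i => hJ (hxJ i)

lemma nIncreasingOn.continuousOn (h : nIncreasingOn f I (k + 2)) (hIo : IsOpen I)
    (hI : I.OrdConnected) : ContinuousOn f I := by
  induction k generalizing f I with
  | zero => exact ((nIncreasingOn_two_iff hI).1 h).continuousOn hIo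
  | succ k ih =>
    intro u hu
    obtain ⟨a, haI, hau⟩ : ∃ a ∈ I, a < u :=
      (((Filter.eventually_of_mem self_mem_nhdsWithin fun _ h => h).and
        (mem_nhdsWithin_of_mem_nhds (hIo.mem_nhds hu))).exists (f := nhdsWithin u (Iio u))).imp
        fun _ h => ⟨h.2, h.1⟩
    have hopen : IsOpen (I ∩ Ioi a) := hIo.inter isOpen_Ioi
    have hslope : ContinuousAt (fun v => (f v - f a) / (v - a)) u :=
      (ih ((h.slope haI).mono fun v hv => ⟨hv.1, ne_of_gt hv.2⟩) hopen
        (hI.inter ordConnected_Ioi)).continuousAt (hopen.mem_nhds ⟨hu, hau⟩)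
    have hcont : ContinuousAt (fun v => (f v - f a) / (v - a) * (v - a) + f a) u := by fun_prop
    refine (hcont.congr ?_).continuousWithinAt
    filter_upwards [Ioi_mem_nhds hau] with v hv
    rw [div_mul_cancel₀ _ (sub_ne_zero.2 (ne_of_gt hv)), sub_add_cancel]

-- The derivatives of `g` and of its interpolating polynomial agree at `k + 1` interlacing points,
-- by Rolle's theorem.
lemma nIncreasingOn_succ_of_hasDerivAt (hI : I.OrdConnected) (hd : ∀ u ∈ I, HasDerivAt g (f u) u)
    (h : nIncreasingOn f I k) : nIncreasingOn g I (k + 1) := by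
  refine nIncreasingOn_of_strictMono fun x hx hxI => ?_
  obtain ⟨P, hdeg, heval, hdiv⟩ := exists_interpolant g hx.injective
  have hrolle (i : Fin (k + 1)) :
      ∃ ξ ∈ Ioo (x i.castSucc) (x i.succ), f ξ = P.derivative.eval ξ := by
    have hder : ∀ u ∈ Icc (x i.castSucc) (x i.succ),
        HasDerivAt (fun v => g v - P.eval v) (f u - P.derivative.eval u) u := fun u hu =>
      (hd u (hI.out (hxI _) (hxI _) hu)).sub (P.hasDerivAt u)
    obtain ⟨ξ, hξ, h0⟩ := exists_hasDerivAt_eq_zero (hx i.castSucc_lt_succ)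
      (fun u hu => (hder u hu).continuousAt.continuousWithinAt)
      (by rw [heval, heval, sub_self, sub_self]) (fun u hu => hder u (Ioo_subset_Icc_self hu))
    exact ⟨ξ, hξ, sub_eq_zero.1 h0⟩
  choose ξ hξ hfξ using hrolle
  have hξmono : StrictMono ξ := fun i j hij =>
    calc ξ i < x i.succ := (hξ i).2
      _ ≤ x j.castSucc := hx.monotone (Fin.succ_le_castSucc_iff.2 hij)
      _ < ξ j := (hξ j).1
  have hPdeg : P.derivative.degree < ((k + 1 : ℕ) : WithBot ℕ) := by
    rw [degree_lt_iff_coeff_zero] at hdeg ⊢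
    exact fun j hj => by rw [coeff_derivative, hdeg _ (by omega), zero_mul]
  have hpos : 0 ≤ P.coeff (k + 1) * ((k : ℝ) + 1) := by
    rw [← coeff_derivative, ← divDiff_eval _ hξmono.injective hPdeg, ← divDiff_congr hfξ]
    exact h ξ hξmono.injective fun i => hI.out (hxI _) (hxI _) (Ioo_subset_Icc_self (hξ i))
  rw [hdiv]
  exact nonneg_of_mul_nonneg_left hpos (by positivity)

lemma nIncreasingOn_eval (hI : I.OrdConnected) {P : ℝ[X]}
    (h : ∀ u ∈ I, 0 ≤ (derivative^[k] P).eval u) : nIncreasingOn (fun u => P.eval u) I k := by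
  induction k generalizing P with
  | zero => exact nIncreasingOn_zero_iff.2 h
  | succ k ih => exact nIncreasingOn_succ_of_hasDerivAt hI (fun u _ => P.hasDerivAt u) (ih h)

lemma nIncreasingOn_mul_sub_pow (hI : I.OrdConnected) {c s : ℝ}
    (h : ∀ u ∈ I, 0 ≤ c * (k.descFactorial j * (u - s) ^ (k - j))) :
    nIncreasingOn (fun u => c * (u - s) ^ k) I j := by
  have heval : (fun u => c * (u - s) ^ k) = fun u => (C c * (X - C s) ^ k).eval u := by simp
  rw [heval]
  refine nIncreasingOn_eval hI fun u hu => ?_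
  simpa [iterate_derivative_C_mul, iterate_derivative_X_sub_pow] using h u hu

lemma AltIncreasingOn.nIncreasingOn (h : AltIncreasingOn f I m n) (hmn : m ≤ n) :
    nIncreasingOn f I n := by
  simpa using h n hmn le_rfl

lemma AltIncreasingOn.comp_mul_add (h : AltIncreasingOn f I m n) {a b : ℝ}
    (ha : 0 < a) (hmaps : MapsTo (fun t => a * t + b) J I) :
    AltIncreasingOn (fun t => f (a * t + b)) J m n := fun k hmk hkn =>
  (h k hmk hkn).comp_mul_add ha hmaps

lemma altIncreasingOn_mul_sub_pow (hI : I.OrdConnected) (hkm : k < m) (c s : ℝ) :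
    AltIncreasingOn (fun u => c * (u - s) ^ k) I m n := fun j hmj _ => by
  simp only [← mul_assoc]
  refine nIncreasingOn_mul_sub_pow hI fun u _ => ?_
  simp [Nat.descFactorial_of_lt (hkm.trans_le hmj)]

lemma altIncreasingOn_sub_pow (hI : I.OrdConnected) (hkn : k ≤ n) {s : ℝ} (hs : ∀ u ∈ I, u ≤ s) :
    AltIncreasingOn (fun u => (-1) ^ (n - k) * (u - s) ^ k) I m n := fun j _ hjn => by
  simp only [← mul_assoc, ← pow_add]
  refine nIncreasingOn_mul_sub_pow hI fun u hu => ?_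
  obtain hjk | hkj := le_or_gt j k
  · have hsign : (-1 : ℝ) ^ (n - j + (n - k)) = (-1) ^ (k - j) := neg_one_pow_congr (by grind)
    rw [hsign, mul_left_comm, ← mul_pow, neg_one_mul, neg_sub]
    have := sub_nonneg.2 (hs u hu)
    positivity
  · simp [Nat.descFactorial_of_lt hkj]

end DividedDifference

section TruncatedPower

variable {I : Set ℝ} {m : ℕ}

lemma phiMinus_of_lt {p u : ℝ} (h : u < p) (r : ℕ) : phiMinus p r u = (p - u) ^ r := by
  obtain rfl | hr := eq_or_ne r 0
  · simp [phiMinus, h]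
  · rw [phiMinus, if_neg hr, max_eq_right (sub_nonneg.2 h.le)]

lemma phiMinus_of_le {p u : ℝ} (h : p ≤ u) (r : ℕ) : phiMinus p r u = 0 := by
  obtain rfl | hr := eq_or_ne r 0
  · simp [phiMinus, h]
  · rw [phiMinus, if_neg hr, max_eq_left (sub_nonpos.2 h), zero_pow hr]

lemma phiMinus_eq_ite (p : ℝ) (r : ℕ) (u : ℝ) :
    phiMinus p r u = if u < p then (p - u) ^ r else 0 := by
  split_ifs with h
  · exact phiMinus_of_lt h r
  · exact phiMinus_of_le (not_lt.1 h) r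

lemma phiMinus_mul_add {a : ℝ} (ha : 0 < a) (b τ : ℝ) (r : ℕ) (t : ℝ) :
    phiMinus (a * τ + b) r (a * t + b) = a ^ r * phiMinus τ r t := by
  have hlt : a * t + b < a * τ + b ↔ t < τ := by
    rw [add_lt_add_iff_right, mul_lt_mul_iff_right₀ ha]
  rw [phiMinus_eq_ite, phiMinus_eq_ite]
  simp only [hlt, mul_ite, mul_zero, ← mul_pow]
  ring_nf

lemma phiMinus_nonneg (p : ℝ) (r : ℕ) (u : ℝ) : 0 ≤ phiMinus p r u := by
  obtain h | h := lt_or_ge u p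
  · exact phiMinus_of_lt h r ▸ pow_nonneg (sub_nonneg.2 h.le) r
  · exact (phiMinus_of_le h r).ge

lemma antitone_phiMinus (p : ℝ) (r : ℕ) : Antitone (phiMinus p r) := fun u v huv => by
  obtain h | h := lt_or_ge v p
  · rw [phiMinus_of_lt h, phiMinus_of_lt (huv.trans_lt h)]
    exact pow_le_pow_left₀ (sub_nonneg.2 h.le) (sub_le_sub_left huv p) r
  · exact phiMinus_of_le h r ▸ phiMinus_nonneg p r u

lemma phiMinus_add_one (p : ℝ) (r : ℕ) : phiMinus p (r + 1) = fun u => max 0 (p - u) ^ (r + 1) := by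
  ext u
  simp [phiMinus]

lemma hasDerivAt_phiMinus (p : ℝ) (r : ℕ) (u : ℝ) :
    HasDerivAt (phiMinus p (r + 2)) (-((r + 2 : ℕ) * phiMinus p (r + 1) u)) u := by
  have hcont : Continuous (phiMinus p (r + 2)) ∧ Continuous (phiMinus p (r + 1)) := by
    constructor <;> rw [phiMinus_add_one] <;> fun_prop
  refine hasDerivAt_of_hasDerivAt_of_ne' (x := p)
    (g := fun v => -((r + 2 : ℕ) * phiMinus p (r + 1) v)) (fun v hv => ?_)
    hcont.1.continuousAt (continuous_const.mul hcont.2).neg.continuousAt u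
  obtain hv | hv := hv.lt_or_gt
  · rw [phiMinus_of_lt hv]
    refine HasDerivAt.congr_of_eventuallyEq ?_ (Filter.eventuallyEq_of_mem (Iio_mem_nhds hv)
      fun w hw => phiMinus_of_lt hw _)
    simpa using! ((hasDerivAt_id v).const_sub p).pow (r + 2)
  · rw [phiMinus_of_le hv.le, mul_zero, neg_zero]
    exact (hasDerivAt_const v 0).congr_of_eventuallyEq (Filter.eventuallyEq_of_mem
      (Ioi_mem_nhds hv) fun w hw => phiMinus_of_le (le_of_lt hw) _)

lemma convexOn_phiMinus_one (p : ℝ) : ConvexOn ℝ univ (phiMinus p 1) := by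
  rw [phiMinus_add_one]
  simp only [zero_add, pow_one]
  exact (convexOn_const 0 convex_univ).sup
    ((convexOn_const p convex_univ).sub (concaveOn_id convex_univ))

lemma nIncreasingOn_phiMinus (hI : I.OrdConnected) (p : ℝ) : ∀ {r k : ℕ}, k ≤ r + 1 →
    nIncreasingOn (fun u => (-1) ^ k * phiMinus p r u) I k
  | r, 0, _ => nIncreasingOn_zero_iff.2 fun u _ => by simpa using phiMinus_nonneg p r u
  | r, 1, _ => nIncreasingOn_one_iff.2 fun u _ v _ huv => by simpa using antitone_phiMinus p r huv
  | 0, k + 2, hk => absurd hk (by omega)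
  | 1, 2, _ => (nIncreasingOn_two_iff hI).2 <| by
    simpa using (convexOn_phiMinus_one p).subset (subset_univ I) hI.convex
  | 1, k + 3, hk => absurd hk (by omega)
  | r + 2, k + 2, hk => by
    refine nIncreasingOn_succ_of_hasDerivAt hI (fun u _ => ?_)
      ((nIncreasingOn_phiMinus hI p (r := r + 1) (k := k + 1) (by omega)).const_mul
        (c := (r + 2 : ℕ)) (Nat.cast_nonneg _))
    exact ((hasDerivAt_phiMinus p r u).const_mul ((-1 : ℝ) ^ (k + 2))).congr_deriv (by ring)

lemma altIncreasingOn_phiMinus (hI : I.OrdConnected) (p : ℝ) (r : ℕ) :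
    AltIncreasingOn (fun u => (-1) ^ (r + 1) * phiMinus p r u) I m (r + 1) := fun j _ hj => by
  have hsign : (-1 : ℝ) ^ (r + 1 - j + (r + 1)) = (-1) ^ j := neg_one_pow_congr (by grind)
  simpa only [← mul_assoc, ← pow_add, hsign] using nIncreasingOn_phiMinus hI p hj

end TruncatedPower

section Bernstein

open Polynomial

variable {R : Type*} [CommRing R] {f g : ℝ → ℝ} {k m n N : ℕ}

lemma fwdDiff_iter_eval_of_degree_lt {P : R[X]} (hP : P.degree < ((k + 1 : ℕ) : WithBot ℕ)) :
    (fwdDiff 1)^[k] P.eval = fun _ => (k.factorial : R) * P.coeff k := by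
  have hle : P.natDegree ≤ k := natDegree_le_iff_degree_le.2 (Order.lt_succ_iff.1 hP)
  obtain hlt | rfl := hle.lt_or_eq
  · simp [fwdDiff_iter_eq_zero_of_degree_lt hlt, coeff_eq_zero_of_natDegree_lt hlt, Pi.zero_def]
  · ext u
    simp [fwdDiff_iter_degree_eq_factorial, mul_comm]

lemma fwdDiff_iter_natCast (f : ℝ → ℝ) (k i : ℕ) :
    (fwdDiff 1)^[k] (fun j : ℕ => f j) i =
      k.factorial * divDiff f k (fun j : Fin (k + 1) => (i : ℝ) + j) := by
  have hinj : Function.Injective fun j : Fin (k + 1) => (i : ℝ) + j := fun a b hab =>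
    Fin.ext (by exact_mod_cast add_left_cancel hab)
  obtain ⟨P, hdeg, heval, hdiv⟩ := exists_interpolant f hinj
  rw [hdiv, ← congrFun (fwdDiff_iter_eval_of_degree_lt hdeg) i, fwdDiff_iter_eq_sum_shift,
    fwdDiff_iter_eq_sum_shift]
  refine Finset.sum_congr rfl fun j hj => ?_
  have hPj := heval ⟨j, Finset.mem_range.1 hj⟩
  simp only [smul_eq_mul, nsmul_eq_mul, mul_one, Nat.cast_add]
  rw [← hPj]

lemma nIncreasingOn.fwdDiff_iter_nonneg (h : nIncreasingOn f (Icc 0 N) k) {i : ℕ}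
    (hi : i + k ≤ N) : 0 ≤ (fwdDiff 1)^[k] (fun j : ℕ => f j) i := by
  rw [fwdDiff_iter_natCast]
  refine mul_nonneg (Nat.cast_nonneg _) (h _ (fun a b hab => ?_) fun j => ⟨by positivity, ?_⟩)
  · exact Fin.ext (by exact_mod_cast add_left_cancel hab)
  · exact_mod_cast (show i + j ≤ N by omega)

/-- The polynomial with Bernstein coefficients `c 0, …, c N` in degree `N`. The Bernstein
approximation of a function `f` on `[0, 1]` is the case `c i = f (i / N)`. -/
noncomputable def bernsteinComb (N : ℕ) (c : ℕ → R) : R[X] :=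
  ∑ i ∈ Finset.range (N + 1), C (c i) * bernsteinPolynomial R N i

lemma bernsteinComb_const_mul (N : ℕ) (a : R) (c : ℕ → R) :
    bernsteinComb N (fun i => a * c i) = C a * bernsteinComb N c := by
  simp only [bernsteinComb, C_mul, mul_assoc, Finset.mul_sum]

lemma derivative_bernsteinComb (N : ℕ) (c : ℕ → R) :
    derivative (bernsteinComb (N + 1) c) = (N + 1) * bernsteinComb N (fwdDiff 1 c) := by
  have hshift : ∑ i ∈ Finset.range (N + 1), C (c (i + 1)) * bernsteinPolynomial R N (i + 1) +
      C (c 0) * bernsteinPolynomial R N 0 = bernsteinComb N c := by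
    rw [← Finset.sum_range_succ' (fun i => C (c i) * bernsteinPolynomial R N i),
      Finset.sum_range_succ, bernsteinPolynomial.eq_zero_of_lt R N.lt_succ_self, mul_zero, add_zero,
      bernsteinComb]
  have hdiff : bernsteinComb N (fwdDiff 1 c) =
      ∑ i ∈ Finset.range (N + 1), C (c (i + 1)) * bernsteinPolynomial R N i -
        bernsteinComb N c := by
    simp only [bernsteinComb, fwdDiff, C_sub, sub_mul, Finset.sum_sub_distrib]
  rw [hdiff, ← hshift, bernsteinComb, Finset.sum_range_succ']
  simp only [derivative_add, derivative_sum, derivative_C_mul, bernsteinPolynomial.derivative_zero,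
    bernsteinPolynomial.derivative_succ, Nat.add_sub_cancel, Nat.cast_add, Nat.cast_one]
  simp only [mul_left_comm (C _), ← Finset.mul_sum, mul_sub, Finset.sum_sub_distrib]
  ring

lemma eval_bernsteinComb_nonneg {c : ℕ → ℝ} (hc : ∀ i ≤ N, 0 ≤ c i) {t : ℝ}
    (ht : t ∈ Icc (0 : ℝ) 1) : 0 ≤ (bernsteinComb N c).eval t := by
  rw [bernsteinComb, eval_finsetSum]
  refine Finset.sum_nonneg fun i hi => ?_
  have hi' := hc i (Finset.mem_range_succ_iff.1 hi)
  have ht0 := ht.1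
  have ht1 := sub_nonneg.2 ht.2
  simp only [bernsteinPolynomial, eval_mul, eval_C, eval_pow, eval_X, eval_sub, eval_one,
    eval_natCast]
  positivity

lemma eval_iterate_derivative_bernsteinComb_nonneg {c : ℕ → ℝ}
    (hc : ∀ i, i + k ≤ N → 0 ≤ (fwdDiff 1)^[k] c i) {t : ℝ} (ht : t ∈ Icc (0 : ℝ) 1) :
    0 ≤ (derivative^[k] (bernsteinComb N c)).eval t := by
  induction k generalizing N c with
  | zero => exact eval_bernsteinComb_nonneg hc ht
  | succ k ih =>
    rw [Function.iterate_succ_apply]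
    obtain _ | N := N
    · simp [bernsteinComb, bernsteinPolynomial]
    · rw [derivative_bernsteinComb, ← Nat.cast_one, ← Nat.cast_add,
        iterate_derivative_natCast_mul, eval_mul, eval_natCast]
      exact mul_nonneg (Nat.cast_nonneg _) (ih fun i hi => hc i (by omega))

lemma nIncreasingOn.eval_iterate_derivative_bernsteinComb_nonneg
    (h : nIncreasingOn g (Icc 0 1) k) (hN : N ≠ 0) {t : ℝ} (ht : t ∈ Icc (0 : ℝ) 1) :
    0 ≤ (derivative^[k] (bernsteinComb N fun i => g (i / N))).eval t := by
  have hN' : (0 : ℝ) < N := by positivity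
  have hscaled : nIncreasingOn (fun u => g ((N : ℝ)⁻¹ * u + 0)) (Icc 0 N) k :=
    h.comp_mul_add (inv_pos.2 hN') fun u hu => by
      simpa [inv_mul_le_iff₀ hN', hN'] using hu
  refine _root_.eval_iterate_derivative_bernsteinComb_nonneg (fun i hi => ?_) ht
  simpa [div_eq_inv_mul] using hscaled.fwdDiff_iter_nonneg hi

lemma AltIncreasingOn.eval_iterate_derivative_bernsteinComb_nonneg
    (h : AltIncreasingOn g (Icc 0 1) m n) (hmk : m ≤ k) (hkn : k ≤ n) (hN : N ≠ 0) {t : ℝ}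
    (ht : t ∈ Icc (0 : ℝ) 1) :
    0 ≤ (-1) ^ (n - k) * (derivative^[k] (bernsteinComb N fun i => g (i / N))).eval t := by
  have hnonneg := (h k hmk hkn).eval_iterate_derivative_bernsteinComb_nonneg hN ht
  rwa [bernsteinComb_const_mul N _ fun i => g (i / N), iterate_derivative_C_mul, eval_C_mul]
    at hnonneg

lemma tendstoUniformlyOn_bernsteinComb (hg : ContinuousOn g (Icc 0 1)) :
    TendstoUniformlyOn (fun N t => (bernsteinComb N fun i => g (i / N)).eval t) g Filter.atTop
      (Icc 0 1) := by
  let G : C(unitInterval, ℝ) := ⟨(Icc 0 1).domRestrict g, hg.domRestrict⟩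
  have hG := ContinuousMap.tendsto_iff_tendstoUniformly.1 (bernsteinApproximation_uniform G)
  have heval (N : ℕ) (t : unitInterval) :
      (bernsteinComb N fun i => g (i / N)).eval ↑t = bernsteinApproximation N G t := by
    simp only [bernsteinApproximation.apply, bernsteinComb, eval_finsetSum, eval_mul, eval_C,
      Finset.sum_range, smul_eq_mul, mul_comm (bernstein _ _ _)]
    rfl
  refine tendstoUniformlyOn_iff_tendstoUniformly_comp_coe.2 ?_
  simpa only [Function.comp_def, heval] using! hG

end Bernstein

section Taylor

variable {D f : ℝ → ℝ} {a b : ℝ} {r : ℕ}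

lemma eq_taylor_add_integral_phiMinus (hf : ContDiff ℝ (r + 1) f) {t : ℝ} (ht : t ∈ Icc a b) :
    f t = ∑ k ∈ Finset.range (r + 1), iteratedDeriv k f b / k.factorial * (t - b) ^ k +
      (-1) ^ (r + 1) / r.factorial * ∫ s in a..b, iteratedDeriv (r + 1) f s * phiMinus s r t := by
  obtain rfl | htb := ht.2.eq_or_lt
  · rw [intervalIntegral.integral_congr (g := fun _ => 0) fun s hs => ?_]
    · simp [Finset.sum_range_succ']
    · rw [uIcc_of_le ht.1] at hs
      simp [phiMinus_of_le hs.2]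
  have hder {k : ℕ} (hk : k ≤ r + 1) {s : ℝ} (hs : s ∈ uIcc b t) :
      iteratedDerivWithin k f (uIcc b t) s = iteratedDeriv k f s :=
    iteratedDerivWithin_eq_iteratedDeriv (uniqueDiffOn_uIcc htb.ne')
      (hf.of_le (by exact_mod_cast hk)).contDiffAt hs
  have htrunc : ∫ s in a..b, iteratedDeriv (r + 1) f s * phiMinus s r t =
      ∫ s in t..b, iteratedDeriv (r + 1) f s * (s - t) ^ r := by
    have hind (s : ℝ) : iteratedDeriv (r + 1) f s * phiMinus s r t =
        (Ioi t).indicator (fun s => iteratedDeriv (r + 1) f s * (s - t) ^ r) s := by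
      simp [phiMinus_eq_ite, indicator_apply]
    simp only [hind]
    rw [intervalIntegral.integral_of_le (ht.1.trans ht.2), intervalIntegral.integral_of_le htb.le,
      setIntegral_indicator measurableSet_Ioi, Ioc_inter_Ioi, sup_eq_right.2 ht.1]
  have htaylor := taylor_integral_remainder (x₀ := b) (x := t) hf.contDiffOn
  rw [taylor_within_apply, sub_eq_iff_eq_add'] at htaylor
  rw [htaylor, htrunc]
  congr 1
  · refine Finset.sum_congr rfl fun k hk => ?_
    rw [hder (Finset.mem_range.1 hk).le left_mem_uIcc, smul_eq_mul]
    ring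
  · rw [intervalIntegral.integral_symm, ← intervalIntegral.integral_neg,
      ← intervalIntegral.integral_const_mul]
    refine intervalIntegral.integral_congr fun s hs => ?_
    rw [hder le_rfl (uIcc_comm t b ▸ hs), ← neg_sub s t, neg_pow (s - t)]
    ring

lemma integrable_mul_phiMinus (ν : Measure ℝ) [IsFiniteMeasure ν] (hD : Continuous D) :
    Integrable (fun p : ℝ × ℝ => D p.2 * phiMinus p.2 r p.1)
      ((ν.restrict (Icc a b)).prod (volume.restrict (Ioc a b))) := by
  rw [Measure.prod_restrict]
  have hcont : Continuous fun p : ℝ × ℝ => D p.2 * (p.2 - p.1) ^ r := by fun_prop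
  have hind : (fun p : ℝ × ℝ => D p.2 * phiMinus p.2 r p.1) =
      {p : ℝ × ℝ | p.1 < p.2}.indicator fun p => D p.2 * (p.2 - p.1) ^ r := by
    ext p
    simp [phiMinus_eq_ite, indicator_apply]
  rw [hind]
  exact ((hcont.continuousOn.integrableOn_compact (isCompact_Icc.prod isCompact_Icc)).mono_set
    (prod_mono_right Ioc_subset_Icc_self)).indicator
      (measurableSet_lt measurable_fst measurable_snd)

lemma setIntegral_Icc_eq_taylor_add (ν : Measure ℝ) [IsFiniteMeasure ν] (hab : a ≤ b)
    (hf : ContDiff ℝ (r + 1) f) :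
    ∫ t in Icc a b, f t ∂ν = ∑ k ∈ Finset.range (r + 1), iteratedDeriv k f b / k.factorial *
        ∫ t in Icc a b, (t - b) ^ k ∂ν + (-1) ^ (r + 1) / r.factorial *
      ∫ s in a..b, iteratedDeriv (r + 1) f s * ∫ t in Icc a b, phiMinus s r t ∂ν := by
  have hkernel := integrable_mul_phiMinus (a := a) (b := b) (r := r) ν
    (hf.continuous_iteratedDeriv (r + 1) (by norm_cast))
  have hpow (k : ℕ) : Integrable (fun t => iteratedDeriv k f b / k.factorial * (t - b) ^ k)
      (ν.restrict (Icc a b)) := by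
    have hcont : Continuous fun t => iteratedDeriv k f b / k.factorial * (t - b) ^ k := by fun_prop
    exact hcont.continuousOn.integrableOn_compact isCompact_Icc
  rw [setIntegral_congr_fun measurableSet_Icc fun t ht => eq_taylor_add_integral_phiMinus hf ht]
  simp only [intervalIntegral.integral_of_le hab]
  rw [integral_add (integrable_finsetSum _ fun k _ => hpow k)
    (hkernel.integral_prod_left.const_mul _), integral_finsetSum _ fun k _ => hpow k,
    integral_const_mul, integral_integral_swap hkernel]
  simp only [integral_const_mul]

end Taylor

section SignedIntegral

variable {B : Set ℝ} {f : ℝ → ℝ} {r : ℕ}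

lemma sInt_const_mul (μ : SignedMeasure ℝ) (A : Set ℝ) (c : ℝ) (f : ℝ → ℝ) :
    sInt μ A (fun t => c * f t) = c * sInt μ A f := by
  simp only [sInt, integral_const_mul, mul_sub]

lemma sInt_indicator (μ : SignedMeasure ℝ) (A : Set ℝ) (hB : MeasurableSet B) (f : ℝ → ℝ) :
    sInt μ A (B.indicator f) = sInt μ (A ∩ B) f := by
  simp only [sInt, setIntegral_indicator hB]

lemma sInt_phiMinus (μ : SignedMeasure ℝ) (r : ℕ) {τ : ℝ} (hτ : τ ≤ 1) :
    sInt μ (Icc 0 1) (phiMinus τ r) = (-1) ^ r * muMinus μ r τ := by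
  have hind : phiMinus τ r = (Iio τ).indicator fun t => (-1) ^ r * (t - τ) ^ r := by
    ext t
    simp [phiMinus_eq_ite, indicator_apply, ← mul_pow]
  have hIco : Icc 0 1 ∩ Iio τ = Ico 0 τ := by
    ext t
    simp only [mem_inter_iff, mem_Icc, mem_Iio, mem_Ico]
    grind
  rw [hind, sInt_indicator μ _ measurableSet_Iio, hIco, sInt_const_mul, muMinus]

lemma sInt_mul_add_sub_pow (μ : SignedMeasure ℝ) (k : ℕ) (x y : ℝ) :
    sInt μ (Icc 0 1) (fun t => ((y - x) * t + x - y) ^ k) = (y - x) ^ k * muK μ k 1 := by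
  rw [muK, ← sInt_const_mul]
  congr 1 with t
  rw [← mul_pow]
  ring

lemma sInt_eq_sum_muK_sub_integral_muMinus (μ : SignedMeasure ℝ) (hf : ContDiff ℝ (r + 1) f) :
    sInt μ (Icc 0 1) f = ∑ k ∈ Finset.range (r + 1), iteratedDeriv k f 1 / k.factorial * muK μ k 1 -
      (∫ s in (0 : ℝ)..1, iteratedDeriv (r + 1) f s * muMinus μ r s) / r.factorial := by
  have hint (ν : Measure ℝ) [IsFiniteMeasure ν] : IntervalIntegrable
      (fun s => iteratedDeriv (r + 1) f s * ∫ t in Icc 0 1, phiMinus s r t ∂ν) volume 0 1 := by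
    rw [intervalIntegrable_iff_integrableOn_Ioc_of_le zero_le_one, IntegrableOn]
    simpa only [integral_const_mul] using (integrable_mul_phiMinus ν
      (hf.continuous_iteratedDeriv (r + 1) (by norm_cast))).integral_prod_right
  have hkernel : ∫ s in (0 : ℝ)..1, iteratedDeriv (r + 1) f s * sInt μ (Icc 0 1) (phiMinus s r) =
      (-1) ^ r * ∫ s in (0 : ℝ)..1, iteratedDeriv (r + 1) f s * muMinus μ r s := by
    rw [← intervalIntegral.integral_const_mul]
    refine intervalIntegral.integral_congr fun s hs => ?_
    rw [uIcc_of_le zero_le_one] at hs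
    simp only [sInt_phiMinus μ r hs.2, mul_left_comm]
  have hsign : (-1 : ℝ) ^ (r + 1) * (-1) ^ r = -1 := by
    rw [← pow_add, Odd.neg_one_pow ⟨r, by ring⟩]
  rw [sInt, setIntegral_Icc_eq_taylor_add _ zero_le_one hf,
    setIntegral_Icc_eq_taylor_add _ zero_le_one hf]
  simp only [sInt, mul_sub] at hkernel
  rw [intervalIntegral.integral_sub (hint _) (hint _)] at hkernel
  simp only [muK, sInt, mul_sub, Finset.sum_sub_distrib]
  linear_combination (-1) ^ (r + 1) / (r.factorial : ℝ) * hkernel + hsign *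
    (∫ s in (0 : ℝ)..1, iteratedDeriv (r + 1) f s * muMinus μ r s) / r.factorial

end SignedIntegral

section Moments

variable {μ : SignedMeasure ℝ} {I : Set ℝ} {f : ℝ → ℝ} {k m n r : ℕ} {x y : ℝ}

/-- Conditions (i)–(iii) on the moments `μ_k(1)` and on the truncated moments `μ_{n-1}^-(τ)`. -/
structure MomentConditions (μ : SignedMeasure ℝ) (m n : ℕ) : Prop where
  muK_eq_zero : ∀ k < m, muK μ k 1 = 0
  muK_alternating : ∀ k, m ≤ k → k < n → 0 ≤ (-1 : ℝ) ^ (n - k) * muK μ k 1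
  muMinus_nonpos : ∀ τ ∈ Ico (0 : ℝ) 1, muMinus μ (n - 1) τ ≤ 0

/-- The Jensen-type inequality `∫ f((1-t)x + ty) dμ(t) ≥ 0` over all segments of `I` and all test
functions in `AltIncreasingOn`. -/
def SegmentInequality (μ : SignedMeasure ℝ) (I : Set ℝ) (m n : ℕ) : Prop :=
  ∀ f : ℝ → ℝ, AltIncreasingOn f I m n → ∀ x ∈ I, ∀ y ∈ I, x < y →
    0 ≤ sInt μ (Icc 0 1) fun t => f ((1 - t) * x + t * y)

lemma one_sub_mul_add_mul_eq (x y t : ℝ) : (1 - t) * x + t * y = (y - x) * t + x := by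
  ring

lemma SegmentInequality.sInt_nonneg (H : SegmentInequality μ I m n) (hf : AltIncreasingOn f I m n)
    (hx : x ∈ I) (hy : y ∈ I) (hxy : x < y) :
    0 ≤ sInt μ (Icc 0 1) fun t => f ((y - x) * t + x) := by
  simpa only [one_sub_mul_add_mul_eq] using H f hf x hx y hy hxy

lemma SegmentInequality.muK_eq_zero (H : SegmentInequality μ I m n) (hI : I.OrdConnected)
    (hx : x ∈ I) (hy : y ∈ I) (hxy : x < y) (hkm : k < m) : muK μ k 1 = 0 := by
  have hsign (c : ℝ) : 0 ≤ c * ((y - x) ^ k * muK μ k 1) := by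
    rw [← sInt_mul_add_sub_pow, ← sInt_const_mul]
    exact H.sInt_nonneg (altIncreasingOn_mul_sub_pow hI hkm c y) hx hy hxy
  have hzero : (y - x) ^ k * muK μ k 1 = 0 := by linarith [hsign 1, hsign (-1)]
  exact (mul_eq_zero.1 hzero).resolve_left (pow_ne_zero k (sub_pos.2 hxy).ne')

lemma continuous_sInt_mul_add_sub_pow (μ : SignedMeasure ℝ) (k : ℕ) (x s : ℝ) :
    Continuous fun v => sInt μ (Icc 0 1) fun t => ((v - x) * t + x - s) ^ k :=
  .sub (continuous_parametric_integral_of_continuous (by fun_prop) isCompact_Icc)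
    (continuous_parametric_integral_of_continuous (by fun_prop) isCompact_Icc)

-- The test functions `± (u - s) ^ k` require `s ≥ sup I`, so `μ_k(1)` is reached only in the limit
-- `y → sup I`.
lemma SegmentInequality.muK_alternating (H : SegmentInequality μ I m n) (hI : I.OrdConnected)
    (hbdd : BddAbove I) (hx : x ∈ I) (hy : y ∈ I) (hxy : x < y) (hkn : k ≤ n) :
    0 ≤ (-1) ^ (n - k) * muK μ k 1 := by
  have hlub : ∀ u ∈ I, u ≤ sSup I := fun u hu => le_csSup hbdd hu
  have hxs : 0 < sSup I - x := sub_pos.2 (hxy.trans_le (hlub y hy))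
  obtain ⟨v, -, hv, hvI⟩ := exists_seq_tendsto_sSup ⟨x, hx⟩ hbdd
  have hlim := ((continuous_sInt_mul_add_sub_pow μ k x (sSup I)).const_mul
    ((-1) ^ (n - k))).continuousAt.tendsto.comp hv
  have hnonneg : 0 ≤ (-1) ^ (n - k) * ((sSup I - x) ^ k * muK μ k 1) := by
    rw [← sInt_mul_add_sub_pow]
    refine ge_of_tendsto hlim ?_
    filter_upwards [hv.eventually (lt_mem_nhds (sub_pos.1 hxs))] with i hi
    rw [Function.comp_apply, ← sInt_const_mul]
    exact H.sInt_nonneg (altIncreasingOn_sub_pow hI hkn hlub) hx (hvI i) hi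
  rw [mul_left_comm] at hnonneg
  exact nonneg_of_mul_nonneg_right hnonneg (pow_pos hxs k)

lemma SegmentInequality.muMinus_nonpos (H : SegmentInequality μ I m (r + 1)) (hI : I.OrdConnected)
    (hx : x ∈ I) (hy : y ∈ I) (hxy : x < y) {τ : ℝ} (hτ : τ ≤ 1) : muMinus μ r τ ≤ 0 := by
  have hpos := sub_pos.2 hxy
  have hnonneg := H.sInt_nonneg (altIncreasingOn_phiMinus hI ((y - x) * τ + x) r) hx hy hxy
  simp only [phiMinus_mul_add hpos, sInt_const_mul, sInt_phiMinus μ r hτ] at hnonneg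
  have hsign : (-1 : ℝ) ^ (r + 1) * (-1) ^ r = -1 := by
    rw [← pow_add, Odd.neg_one_pow ⟨r, by ring⟩]
  have hle : 0 ≤ (y - x) ^ r * -muMinus μ r τ := by
    linear_combination hnonneg + (y - x) ^ r * muMinus μ r τ * hsign
  exact neg_nonneg.1 (nonneg_of_mul_nonneg_right hle (pow_pos hpos r))

lemma SegmentInequality.momentConditions (H : SegmentInequality μ I m n) (hn : n ≠ 0)
    (hI : I.OrdConnected) (hnt : I.Nontrivial) (hbdd : BddAbove I) :
    MomentConditions μ m n := by
  obtain ⟨r, rfl⟩ := Nat.exists_eq_succ_of_ne_zero hn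
  obtain ⟨x, hx, y, hy, hxy⟩ := hnt.exists_lt
  exact ⟨fun k => H.muK_eq_zero hI hx hy hxy,
    fun k _ hkn => H.muK_alternating hI hbdd hx hy hxy hkn.le,
    fun τ hτ => H.muMinus_nonpos hI hx hy hxy hτ.2.le⟩

lemma MomentConditions.mul_muK_nonneg (hμ : MomentConditions μ m n) (hkn : k < n) {d : ℝ}
    (hd : m ≤ k → 0 ≤ (-1) ^ (n - k) * d) : 0 ≤ d * muK μ k 1 := by
  obtain hkm | hmk := lt_or_ge k m
  · rw [hμ.muK_eq_zero k hkm, mul_zero]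
  · calc 0 ≤ ((-1) ^ (n - k) * d) * ((-1) ^ (n - k) * muK μ k 1) :=
          mul_nonneg (hd hmk) (hμ.muK_alternating k hmk hkn)
      _ = d * muK μ k 1 := by rw [mul_mul_mul_comm, ← mul_pow]; simp

end Moments

section Sufficiency

open Polynomial

variable {μ : SignedMeasure ℝ} {I : Set ℝ} {f g : ℝ → ℝ} {m n r : ℕ}

lemma iteratedDeriv_polynomial_eval (q : ℝ[X]) (k : ℕ) :
    iteratedDeriv k (fun t => q.eval t) = fun t => (derivative^[k] q).eval t := by
  induction k with
  | zero => simp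
  | succ k ih =>
    ext t
    rw [iteratedDeriv_succ, ih, Polynomial.deriv, Function.iterate_succ_apply']

lemma MomentConditions.sInt_polynomial_nonneg (hμ : MomentConditions μ m (r + 1)) (hmr : m ≤ r + 1)
    {q : ℝ[X]} (hq : ∀ k, m ≤ k → k ≤ r + 1 → ∀ t ∈ Icc (0 : ℝ) 1,
      0 ≤ (-1) ^ (r + 1 - k) * (derivative^[k] q).eval t) :
    0 ≤ sInt μ (Icc 0 1) fun t => q.eval t := by
  rw [sInt_eq_sum_muK_sub_integral_muMinus (r := r) μ (by simpa using q.contDiff_aeval (𝕜 := ℝ) _)]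
  simp only [iteratedDeriv_polynomial_eval]
  have hsum : 0 ≤ ∑ k ∈ Finset.range (r + 1),
      (derivative^[k] q).eval 1 / k.factorial * muK μ k 1 := by
    refine Finset.sum_nonneg fun k hk => hμ.mul_muK_nonneg (Finset.mem_range.1 hk) fun hmk => ?_
    rw [← mul_div_assoc]
    exact div_nonneg (hq k hmk (Finset.mem_range.1 hk).le 1 (by simp)) (Nat.cast_nonneg _)
  have hint : ∫ s in (0 : ℝ)..1, (derivative^[r + 1] q).eval s * muMinus μ r s ≤ 0 := by
    rw [intervalIntegral.integral_of_le zero_le_one, integral_Ioc_eq_integral_Ioo]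
    refine setIntegral_nonpos measurableSet_Ioo fun s hs => mul_nonpos_of_nonneg_of_nonpos ?_
      (hμ.muMinus_nonpos s (Ioo_subset_Ico_self hs))
    simpa using hq (r + 1) hmr le_rfl s (Ioo_subset_Icc_self hs)
  exact sub_nonneg.2 ((div_nonpos_of_nonpos_of_nonneg hint (Nat.cast_nonneg _)).trans hsum)

lemma tendsto_sInt_Icc_of_tendstoUniformlyOn (μ : SignedMeasure ℝ) {F : ℕ → ℝ → ℝ}
    (hF : ∀ N, Continuous (F N)) (hg : ContinuousOn g (Icc 0 1))
    (h : TendstoUniformlyOn F g Filter.atTop (Icc 0 1)) :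
    Filter.Tendsto (fun N => sInt μ (Icc 0 1) (F N)) Filter.atTop (nhds (sInt μ (Icc 0 1) g)) := by
  obtain ⟨C, hC⟩ := isCompact_Icc.exists_bound_of_continuousOn hg
  have hbound : ∀ᶠ N in Filter.atTop, ∀ t ∈ Icc (0 : ℝ) 1, ‖F N t‖ ≤ C + 1 := by
    filter_upwards [Metric.tendstoUniformlyOn_iff.1 h 1 one_pos] with N hN t ht
    calc ‖F N t‖ ≤ ‖g t‖ + ‖F N t - g t‖ := norm_le_insert' _ _
      _ ≤ C + 1 := by
        rw [← dist_eq_norm, dist_comm]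
        exact add_le_add (hC t ht) (hN t ht).le
  have hlim (ν : Measure ℝ) [IsFiniteMeasure ν] : Filter.Tendsto
      (fun N => ∫ t in Icc 0 1, F N t ∂ν) Filter.atTop (nhds (∫ t in Icc 0 1, g t ∂ν)) :=
    tendsto_integral_filter_of_norm_le_const (.of_forall fun N => (hF N).aestronglyMeasurable)
      ⟨C + 1, hbound.mono fun N hN => ae_restrict_of_forall_mem measurableSet_Icc hN⟩
      (ae_restrict_of_forall_mem measurableSet_Icc fun t ht => h.tendsto_at ht)
  exact (hlim _).sub (hlim _)

lemma MomentConditions.sInt_nonneg_of_continuousOn (hμ : MomentConditions μ m (r + 1))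
    (hmr : m ≤ r + 1) (hg : AltIncreasingOn g (Icc 0 1) m (r + 1))
    (hcont : ContinuousOn g (Icc 0 1)) : 0 ≤ sInt μ (Icc 0 1) g := by
  refine ge_of_tendsto (tendsto_sInt_Icc_of_tendstoUniformlyOn μ (fun N => Polynomial.continuous _)
    hcont (tendstoUniformlyOn_bernsteinComb hcont)) ?_
  filter_upwards [Filter.eventually_ne_atTop 0] with N hN
  exact hμ.sInt_polynomial_nonneg hmr fun k hmk hkn t ht =>
    hg.eval_iterate_derivative_bernsteinComb_nonneg hmk hkn hN ht

lemma measure_le_of_isLowerSet {P N : Measure ℝ} [IsFiniteMeasure P] [IsFiniteMeasure N] {b : ℝ}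
    (hPN : ∀ τ < b, P (Iio τ) ≤ N (Iio τ)) {S : Set ℝ} (hS : IsLowerSet S) (hSb : S ⊆ Iio b) :
    P S ≤ N S := by
  rw [hS.ordConnected.measurableSet.measure_eq_iSup_isCompact P, S.measure_eq_iInf_isOpen N]
  refine iSup₂_le fun K hKS => iSup_le fun hK => le_iInf₂ fun U hSU => le_iInf fun hU => ?_
  obtain rfl | hKne := K.eq_empty_or_nonempty
  · simp
  obtain ⟨c, hcK, hKc⟩ := hK.exists_isGreatest hKne
  have hcS : c ∈ S := hKS hcK
  obtain ⟨b', hcb', hb'⟩ := exists_between (mem_Iio.1 (hSb hcS))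
  obtain ⟨τ, ⟨hcτ, hτb'⟩, hτU⟩ := exists_Ico_subset_of_mem_nhds' (hU.mem_nhds (hSU hcS)) hcb'
  calc P K ≤ P (Iio τ) := measure_mono fun t ht => (hKc ht).trans_lt hcτ
    _ ≤ N (Iio τ) := hPN τ (hτb'.trans_lt hb')
    _ ≤ N U := measure_mono fun t ht => (le_total t c).elim (fun htc => hSU (hS htc hcS))
      fun hct => hτU ⟨hct, ht⟩

lemma integral_le_integral_of_antitone {P N : Measure ℝ} [IsFiniteMeasure P] [IsFiniteMeasure N]
    {b : ℝ} (hPN : ∀ τ < b, P (Iio τ) ≤ N (Iio τ)) {h : ℝ → ℝ} (hanti : Antitone h)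
    (hb : ∀ t, b ≤ t → h t = 0) (hN : Integrable h N) : ∫ t, h t ∂P ≤ ∫ t, h t ∂N := by
  have hnonneg (t : ℝ) : 0 ≤ h t := hb (max b t) (le_max_left b t) ▸ hanti (le_max_right b t)
  have hmeas := hanti.measurable
  rw [integral_eq_lintegral_of_nonneg_ae (.of_forall hnonneg) hmeas.aestronglyMeasurable,
    integral_eq_lintegral_of_nonneg_ae (.of_forall hnonneg) hmeas.aestronglyMeasurable]
  refine ENNReal.toReal_mono hN.lintegral_lt_top.ne ?_
  rw [lintegral_eq_lintegral_meas_lt P (.of_forall hnonneg) hmeas.aemeasurable,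
    lintegral_eq_lintegral_meas_lt N (.of_forall hnonneg) hmeas.aemeasurable]
  refine setLIntegral_mono' measurableSet_Ioi fun s hs => measure_le_of_isLowerSet hPN
    (fun t u hut ht => lt_of_lt_of_le ht (hanti hut)) fun t ht => ?_
  by_contra hbt
  exact (mem_Ioi.1 hs).not_ge (hb t (not_lt.1 hbt) ▸ ht.le)

lemma muMinus_zero_nonpos_iff (μ : SignedMeasure ℝ) (τ : ℝ) :
    muMinus μ 0 τ ≤ 0 ↔ μ.toJordanDecomposition.posPart (Ico 0 τ) ≤
      μ.toJordanDecomposition.negPart (Ico 0 τ) := by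
  simp [muMinus, sInt, measureReal_def, ENNReal.toReal_le_toReal]

lemma mul_muK_zero_le_sInt_of_monotoneOn (hμ : ∀ τ ∈ Ico (0 : ℝ) 1, muMinus μ 0 τ ≤ 0)
    (hg : MonotoneOn g (Icc 0 1)) : g 1 * muK μ 0 1 ≤ sInt μ (Icc 0 1) g := by
  let h : ℝ → ℝ := fun t => g 1 - g (projIcc 0 1 zero_le_one t)
  have hanti : Antitone h := fun s t hst => sub_le_sub_left
    (hg (projIcc 0 1 zero_le_one s).2 (projIcc 0 1 zero_le_one t).2 (monotone_projIcc _ hst)) _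
  have hone : ∀ t, 1 ≤ t → h t = 0 := fun t ht => by simp [h, projIcc_of_right_le _ ht]
  have hhint (ν : Measure ℝ) [IsFiniteMeasure ν] : IntegrableOn h (Icc 0 1) ν :=
    (hanti.antitoneOn _).integrableOn_isCompact isCompact_Icc
  have hPN : ∀ τ < 1, μ.toJordanDecomposition.posPart.restrict (Icc 0 1) (Iio τ) ≤
      μ.toJordanDecomposition.negPart.restrict (Icc 0 1) (Iio τ) := fun τ hτ => by
    have hIco : Iio τ ∩ Icc 0 1 = Ico 0 τ := by
      ext t
      simp only [mem_inter_iff, mem_Icc, mem_Iio, mem_Ico]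
      grind
    rw [Measure.restrict_apply measurableSet_Iio, Measure.restrict_apply measurableSet_Iio, hIco]
    obtain hτ0 | hτ0 := lt_or_ge τ 0
    · simp [Ico_eq_empty_of_le hτ0.le]
    · exact (muMinus_zero_nonpos_iff μ τ).1 (hμ τ ⟨hτ0, hτ⟩)
  have hle := integral_le_integral_of_antitone hPN hanti hone (hhint _)
  have hsplit (ν : Measure ℝ) [IsFiniteMeasure ν] :
      ∫ t in Icc 0 1, g t ∂ν = g 1 * ν.real (Icc 0 1) - ∫ t in Icc 0 1, h t ∂ν := by
    rw [setIntegral_congr_fun (g := fun t => g 1 - h t) measurableSet_Icc fun t ht => by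
      simp [h, projIcc_of_mem _ ht], integral_sub (integrable_const _) (hhint ν)]
    simp [mul_comm]
  have hmuK : muK μ 0 1 = μ.toJordanDecomposition.posPart.real (Icc 0 1) -
      μ.toJordanDecomposition.negPart.real (Icc 0 1) := by
    simp [muK, sInt]
  rw [sInt, hsplit, hsplit, hmuK]
  linarith

lemma MomentConditions.sInt_nonneg_of_monotoneOn (hμ : MomentConditions μ m 1)
    (hg : AltIncreasingOn g (Icc 0 1) m 1) (hmono : MonotoneOn g (Icc 0 1)) :
    0 ≤ sInt μ (Icc 0 1) g := by
  refine (hμ.mul_muK_nonneg one_pos fun hm => ?_).trans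
    (mul_muK_zero_le_sInt_of_monotoneOn hμ.muMinus_nonpos hmono)
  exact nIncreasingOn_zero_iff.1 (hg 0 hm zero_le_one) 1 (by simp)

lemma MomentConditions.segmentInequality (hμ : MomentConditions μ m n) (hn : n ≠ 0) (hmn : m ≤ n)
    (hIo : IsOpen I) (hI : I.OrdConnected) : SegmentInequality μ I m n := by
  intro f hf x hx y hy hxy
  simp only [one_sub_mul_add_mul_eq]
  have hmaps : MapsTo (fun t => (y - x) * t + x) (Icc 0 1) I := fun t ht => hI.out hx hy
    ⟨by nlinarith [ht.1], by nlinarith [ht.2]⟩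
  have hg := hf.comp_mul_add (sub_pos.2 hxy) hmaps
  obtain ⟨r, rfl⟩ := Nat.exists_eq_succ_of_ne_zero hn
  obtain _ | r := r
  · exact hμ.sInt_nonneg_of_monotoneOn hg (nIncreasingOn_one_iff.1 (hg.nIncreasingOn hmn))
  · have hcont := (hf.nIncreasingOn hmn).continuousOn hIo hI
    exact hμ.sInt_nonneg_of_continuousOn hmn hg (hcont.comp (by fun_prop) hmaps)

end Sufficiency

theorem stmt16_general (I : Set ℝ) (hIo : IsOpen I) (hIc : I.OrdConnected) (hIne : I.Nonempty)
    (hbdd : BddAbove I) (m n : ℕ) (hn : n ≠ 0) (hmn : m ≤ n) (μ : MeasureTheory.SignedMeasure ℝ) :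
    (∀ f : ℝ → ℝ,
        (∀ k, m ≤ k → k ≤ n → nIncreasingOn (fun u => (-1 : ℝ) ^ (n - k) * f u) I k) →
        ∀ x ∈ I, ∀ y ∈ I, x < y →
          0 ≤ sInt μ (Icc 0 1) (fun t => f ((1 - t) * x + t * y))) ↔
      ((∀ k < m, muK μ k 1 = 0) ∧
        (∀ k, m ≤ k → k < n → 0 ≤ (-1 : ℝ) ^ (n - k) * muK μ k 1) ∧
        ∀ τ ∈ Ico (0:ℝ) 1, muMinus μ (n - 1) τ ≤ 0) := by
  constructor
  · intro (H : SegmentInequality μ I m n)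
    have hnt : I.Nontrivial := (infinite_of_mem_nhds _ (hIo.mem_nhds hIne.some_mem)).nontrivial
    obtain ⟨h0, halt, hτ⟩ := H.momentConditions hn hIc hnt hbdd
    exact ⟨h0, halt, hτ⟩
  · rintro ⟨h0, halt, hτ⟩
    exact MomentConditions.segmentInequality ⟨h0, halt, hτ⟩ hn hmn hIo hIc

theorem stmt16 (I : Set ℝ) (hIo : IsOpen I) (hIc : I.OrdConnected) (hIne : I.Nonempty)
    (hbdd : BddAbove I) (m n : ℕ) (hmn : m < n) (μ : MeasureTheory.SignedMeasure ℝ) :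
    (∀ f : ℝ → ℝ,
        (∀ k, m ≤ k → k ≤ n → nIncreasingOn (fun u => (-1 : ℝ) ^ (n - k) * f u) I k) →
        ∀ x ∈ I, ∀ y ∈ I, x < y →
          0 ≤ sInt μ (Icc 0 1) (fun t => f ((1 - t) * x + t * y))) ↔
      ((∀ k < m, muK μ k 1 = 0) ∧
        (∀ k, m ≤ k → k < n → 0 ≤ (-1 : ℝ) ^ (n - k) * muK μ k 1) ∧
        ∀ τ ∈ Ico (0:ℝ) 1, muMinus μ (n - 1) τ ≤ 0) :=
  stmt16_general I hIo hIc hIne hbdd m n (by omega) hmn.le μ
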